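/- Let H be a Hilbert space, 1 ≤ r < ∞, and T an operator in the Schatten class S^r(H). Then T can be decomposed as T = Σ_{k≥0} α_k u_k (convergence in operator norm), where each u_k is an operator of rank at most 2^k and operator norm at most 1, and the coefficients satisfy Σ_{k≥0} 2^k |α_k|^r ≤ 2 ‖T‖_{S^r}^r. -/

import Mathlib

/-- The `n`-th approximation number of a bounded operator `T` on a Hilbert space:
the distance from `T` to the operators of rank at most `n`.  For a compact operator
it coincides with the `(n+1)`-st singular value, so that
`‖T‖_{S^r}^r = ∑_{n≥0} (approxNumber T n)^r`. -/
noncomputable def approxNumber {H : Type*} [NormedAddCommGroup H] [InnerProductSpace ℂ H]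
    (T : H →L[ℂ] H) (n : ℕ) : ℝ :=
  sInf {c : ℝ | ∃ u : H →L[ℂ] H,
    Module.rank ℂ (LinearMap.range (u : H →ₗ[ℂ] H)) ≤ (n : Cardinal) ∧ c = ‖T - u‖}

/-!
Build an increasing chain of finite-dimensional `T† T`-invariant subspaces `V n` greedily: to `V n`
add an eigenvector of `T† T` in `(V n)ᗮ` on which `T` attains its norm over `(V n)ᗮ`. As long as `T`
does not vanish on `(V n)ᗮ`, the operator `T` expands the `(n + 1)`-dimensional space `V (n + 1)` by
at least that norm, and every operator of rank at most `n` has a kernel vector in `V (n + 1)`. Hence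
`T` has norm at most `approxNumber T n` on `(V n)ᗮ`. The block of `T` carried by the orthogonal
complement of `V (2 ^ k - 1)` in `V (2 ^ (k + 1) - 1)` therefore has rank at most `2 ^ k` and norm
at most `α k = approxNumber T (2 ^ k - 1)`. These blocks telescope to `T`, and Cauchy condensation
bounds `∑ 2 ^ k * α k ^ r`.
-/

open Filter Module Topology
open scoped InnerProduct

section Sequences

theorem sum_range_two_pow_mul_le_two_mul_tsum {f : ℕ → ℝ} (hf : Antitone f) (hs : Summable f)
    (n : ℕ) : ∑ k ∈ Finset.range n, 2 ^ k * f (2 ^ k - 1) ≤ 2 * ∑' i, f i := by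
  have hf0 (i : ℕ) : 0 ≤ f i := hf.le_of_tendsto hs.tendsto_atTop_zero i
  have condensed := Finset.sum_condensed_le (f := fun i => f (i - 1))
    (fun i j _ hij => hf (Nat.sub_le_sub_right hij 1)) n
  have tail_eq : ∑ i ∈ Finset.Ico 2 (2 ^ n + 1), f (i - 1) = ∑ i ∈ Finset.Ico 1 (2 ^ n), f i :=
    (Finset.sum_Ico_add' (fun i => f (i - 1)) 1 (2 ^ n) 1).symm
  calc ∑ k ∈ Finset.range n, 2 ^ k * f (2 ^ k - 1)
      ≤ ∑ k ∈ Finset.range (n + 1), 2 ^ k * f (2 ^ k - 1) :=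
        Finset.sum_le_sum_of_subset_of_nonneg (Finset.range_mono n.le_succ)
          fun k _ _ => mul_nonneg (by positivity) (hf0 _)
    _ ≤ f 0 + 2 * ∑ i ∈ Finset.Ico 1 (2 ^ n), f i := by simpa [tail_eq] using condensed
    _ ≤ 2 * (f 0 + ∑ i ∈ Finset.Ico 1 (2 ^ n), f i) := by linarith [hf0 0]
    _ = 2 * ∑ i ∈ Finset.range (2 ^ n), f i := by
        rw [Finset.range_eq_Ico, Finset.sum_eq_sum_Ico_succ_bot (Nat.two_pow_pos n)]
    _ ≤ 2 * ∑' i, f i := by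
        gcongr
        exact hs.sum_le_tsum _ fun i _ => hf0 i

theorem two_pow_mul_nonneg_of_antitone {f : ℕ → ℝ} (hf : Antitone f) (hs : Summable f) (k : ℕ) :
    0 ≤ 2 ^ k * f (2 ^ k - 1) :=
  mul_nonneg (by positivity) (hf.le_of_tendsto hs.tendsto_atTop_zero _)

theorem summable_two_pow_mul_of_antitone {f : ℕ → ℝ} (hf : Antitone f) (hs : Summable f) :
    Summable fun k => 2 ^ k * f (2 ^ k - 1) :=
  summable_of_sum_range_le (two_pow_mul_nonneg_of_antitone hf hs)
    (sum_range_two_pow_mul_le_two_mul_tsum hf hs)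

theorem tsum_two_pow_mul_le_two_mul_tsum {f : ℕ → ℝ} (hf : Antitone f) (hs : Summable f) :
    ∑' k, 2 ^ k * f (2 ^ k - 1) ≤ 2 * ∑' i, f i :=
  Real.tsum_le_of_sum_range_le (two_pow_mul_nonneg_of_antitone hf hs)
    (sum_range_two_pow_mul_le_two_mul_tsum hf hs)

theorem tendsto_zero_of_summable_rpow {a : ℕ → ℝ} {r : ℝ} (hr : 0 < r) (ha : ∀ n, 0 ≤ a n)
    (hs : Summable fun n => a n ^ r) : Tendsto a atTop (𝓝 0) := by
  have h := hs.tendsto_atTop_zero.rpow_const (p := r⁻¹) (Or.inr (by positivity))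
  rw [Real.zero_rpow (by positivity)] at h
  exact h.congr fun n => Real.rpow_rpow_inv (ha n) hr.ne'

theorem summable_of_summable_pow_mul_rpow {a : ℕ → ℝ} {b r : ℝ} (hb : 1 < b) (hr : 0 < r)
    (ha : ∀ k, 0 ≤ a k) (hs : Summable fun k => b ^ k * a k ^ r) : Summable a := by
  have : 0 < b := by linarith
  have ratio_lt_one : b⁻¹ ^ r⁻¹ < 1 :=
    Real.rpow_lt_one (by positivity) (inv_lt_one_of_one_lt₀ hb) (by positivity)
  refine .of_norm_bounded_eventually_nat
    (summable_geometric_of_lt_one (by positivity) ratio_lt_one) ?_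
  filter_upwards [hs.tendsto_atTop_zero.eventually_le_const one_pos] with k hk
  have hpow : a k ^ r ≤ b⁻¹ ^ k := by
    rwa [inv_pow, ← one_div, le_div_iff₀' (by positivity)]
  calc ‖a k‖ = a k := Real.norm_of_nonneg (ha k)
    _ ≤ (b⁻¹ ^ k) ^ r⁻¹ := (Real.le_rpow_inv_iff_of_pos (ha k) (by positivity) hr).2 hpow
    _ = (b⁻¹ ^ r⁻¹) ^ k := (Real.rpow_pow_comm (by positivity) _ _).symm

theorem hasSum_sub_succ {G : Type*} [AddCommGroup G] [TopologicalSpace G] [IsTopologicalAddGroup G]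
    [T2Space G] {f : ℕ → G} (hs : Summable fun k => f k - f (k + 1))
    (hf : Tendsto f atTop (𝓝 0)) : HasSum (fun k => f k - f (k + 1)) (f 0) := by
  rw [hs.hasSum_iff_tendsto_nat]
  simpa only [Finset.sum_range_sub', sub_zero] using hf.const_sub (f 0)

end Sequences

section Normalization

variable {X : Type*} [NormedAddCommGroup X] [NormedSpace ℝ X] {a : ℝ} {x : X}

theorem norm_inv_smul_le_one (h : ‖x‖ ≤ a) : ‖a⁻¹ • x‖ ≤ 1 := by
  have ha : 0 ≤ a := (norm_nonneg x).trans h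
  rw [norm_smul, norm_inv, Real.norm_of_nonneg ha]
  exact inv_mul_le_one_of_le₀ h ha

theorem smul_inv_smul_of_norm_le (h : ‖x‖ ≤ a) : a • a⁻¹ • x = x := by
  rcases eq_or_ne a 0 with rfl | ha
  · rw [norm_le_zero_iff.1 h, smul_zero, smul_zero]
  · exact smul_inv_smul₀ ha x

end Normalization

section FiniteDimensional

theorem isCompactOperator_of_finiteDimensional_range {𝕜 X Y : Type*} [NontriviallyNormedField 𝕜]
    [LocallyCompactSpace 𝕜] [NormedAddCommGroup X] [NormedSpace 𝕜 X] [NormedAddCommGroup Y]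
    [NormedSpace 𝕜 Y] (u : X →L[𝕜] Y) [FiniteDimensional 𝕜 u.toLinearMap.range] :
    IsCompactOperator u := by
  have : ProperSpace u.toLinearMap.range := FiniteDimensional.proper 𝕜 _
  exact (isCompactOperator_of_locallyCompactSpace_dom u.rangeRestrict).clm_comp
    u.toLinearMap.range.subtypeL

theorem exists_mem_ne_zero_apply_eq_zero_of_rank_le {K M N : Type*} [DivisionRing K]
    [AddCommGroup M] [Module K M] [AddCommGroup N] [Module K N] {u : M →ₗ[K] N}
    {W : Submodule K M} {n : ℕ} (hu : u.rank ≤ n) (hn : n < finrank K W) :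
    ∃ w ∈ W, w ≠ 0 ∧ u w = 0 := by
  have : Module.Finite K u.range :=
    rank_lt_aleph0_iff.1 (hu.trans_lt Cardinal.natCast_lt_aleph0)
  have : Module.Finite K W := finite_of_finrank_pos (Nat.zero_lt_of_lt hn)
  have finrank_lt : finrank K u.range < finrank K W := (finrank_le_of_rank_le hu).trans_lt hn
  obtain ⟨w, hw, hw0⟩ := Submodule.exists_mem_ne_zero_of_ne_bot
    (LinearMap.ker_ne_bot_of_finrank_lt (f := u.rangeRestrict ∘ₗ W.subtype) finrank_lt)
  exact ⟨w, w.2, by simpa using hw0, congrArg Subtype.val (LinearMap.mem_ker.1 hw)⟩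

variable {𝕜 E F : Type*} [RCLike 𝕜] [NormedAddCommGroup E] [InnerProductSpace 𝕜 E]
  [NormedAddCommGroup F] [InnerProductSpace 𝕜 F]

theorem finrank_sup_span_singleton_of_mem_orthogonal {V : Submodule 𝕜 E} [FiniteDimensional 𝕜 V]
    {x : E} (hxV : x ∈ Vᗮ) (hx : x ≠ 0) :
    finrank 𝕜 (V ⊔ 𝕜 ∙ x : Submodule 𝕜 E) = finrank 𝕜 V + 1 := by
  have hdisj : Disjoint V (𝕜 ∙ x) :=
    V.orthogonal_disjoint.mono_right ((Submodule.span_singleton_le_iff_mem x Vᗮ).2 hxV)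
  have := Submodule.finrank_sup_add_finrank_inf_eq V (𝕜 ∙ x)
  rwa [hdisj.eq_bot, finrank_bot, finrank_span_singleton hx] at this

theorem norm_comp_starProjection_le (T : E →L[𝕜] F) (V : Submodule 𝕜 E)
    [V.HasOrthogonalProjection] : ‖T ∘L V.starProjection‖ ≤ ‖T‖ :=
  (T.opNorm_comp_le _).trans (mul_le_of_le_one_right (norm_nonneg T) V.starProjection_norm_le)

end FiniteDimensional

section Tail

variable {𝕜 E F : Type*} [RCLike 𝕜] [NormedAddCommGroup E] [InnerProductSpace 𝕜 E]
  [CompleteSpace E] [NormedAddCommGroup F] [InnerProductSpace 𝕜 F]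

/-- The part of `T` that lives on the orthogonal complement of `V`: it agrees with `T` on `Vᗮ` and
vanishes on `V`. Its norm is the norm of the restriction of `T` to `Vᗮ`. -/
noncomputable def tailOperator (T : E →L[𝕜] F) (V : Submodule 𝕜 E) : E →L[𝕜] F :=
  T ∘L Vᗮ.starProjection

variable (T : E →L[𝕜] F) {V W : Submodule 𝕜 E}

theorem tailOperator_bot : tailOperator T ⊥ = T := by
  rw [tailOperator, Submodule.starProjection_orthogonal, Submodule.starProjection_bot, sub_zero,
    ContinuousLinearMap.comp_id]

theorem tailOperator_comp_starProjection_orthogonal_of_le (h : V ≤ W) :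
    tailOperator T V ∘L Wᗮ.starProjection = tailOperator T W := by
  have absorb : Vᗮ.starProjection ∘L Wᗮ.starProjection = Wᗮ.starProjection :=
    ContinuousLinearMap.ext fun x => Submodule.starProjection_eq_self_iff.2
      (Submodule.orthogonal_le h (Submodule.starProjection_apply_mem Wᗮ x))
  rw [tailOperator, ContinuousLinearMap.comp_assoc, absorb, tailOperator]

theorem norm_tailOperator_anti (h : V ≤ W) : ‖tailOperator T W‖ ≤ ‖tailOperator T V‖ := by
  rw [← tailOperator_comp_starProjection_orthogonal_of_le T h]
  exact norm_comp_starProjection_le _ _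

theorem tailOperator_sub_tailOperator_of_le [W.HasOrthogonalProjection] (h : V ≤ W) :
    tailOperator T V - tailOperator T W = tailOperator T V ∘L W.starProjection := by
  rw [← tailOperator_comp_starProjection_orthogonal_of_le T h,
    Submodule.starProjection_orthogonal, ContinuousLinearMap.comp_sub,
    ContinuousLinearMap.comp_id, sub_sub_cancel]

theorem norm_tailOperator_sub_tailOperator_le [W.HasOrthogonalProjection] (h : V ≤ W) :
    ‖tailOperator T V - tailOperator T W‖ ≤ ‖tailOperator T V‖ := by
  rw [tailOperator_sub_tailOperator_of_le T h]
  exact norm_comp_starProjection_le _ _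

theorem range_tailOperator_sub_tailOperator_le [V.HasOrthogonalProjection]
    [W.HasOrthogonalProjection] (h : V ≤ W) :
    (tailOperator T V - tailOperator T W : E →L[𝕜] F).toLinearMap.range ≤
      (Vᗮ ⊓ W).map T.toLinearMap := by
  rw [tailOperator_sub_tailOperator_of_le T h]
  rintro _ ⟨x, rfl⟩
  refine ⟨Vᗮ.starProjection (W.starProjection x),
    ⟨Submodule.starProjection_apply_mem _ _, ?_⟩, rfl⟩
  rw [Submodule.starProjection_orthogonal_val]
  exact W.sub_mem (Submodule.starProjection_apply_mem _ _)
    (h (Submodule.starProjection_apply_mem _ _))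

theorem rank_tailOperator_sub_tailOperator_le [FiniteDimensional 𝕜 W] (h : V ≤ W) {n : ℕ}
    (hn : finrank 𝕜 W ≤ finrank 𝕜 V + n) :
    (tailOperator T V - tailOperator T W : E →L[𝕜] F).toLinearMap.rank ≤ n := by
  have : FiniteDimensional 𝕜 V := Submodule.finiteDimensional_of_le h
  have : FiniteDimensional 𝕜 (Vᗮ ⊓ W : Submodule 𝕜 E) :=
    Submodule.finiteDimensional_of_le inf_le_right
  have hdim := Submodule.finrank_add_inf_finrank_orthogonal h
  have hrange := range_tailOperator_sub_tailOperator_le T h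
  have : FiniteDimensional 𝕜 (tailOperator T V - tailOperator T W : E →L[𝕜] F).toLinearMap.range :=
    Submodule.finiteDimensional_of_le hrange
  have finrank_range_le := (Submodule.finrank_mono hrange).trans (Submodule.finrank_map_le _ _)
  rw [LinearMap.rank, ← finrank_eq_rank, Nat.cast_le]
  omega

end Tail

section DominantSubspace

variable {𝕜 E F : Type*} [RCLike 𝕜] [NormedAddCommGroup E] [InnerProductSpace 𝕜 E]
  [CompleteSpace E] [NormedAddCommGroup F] [InnerProductSpace 𝕜 F] [CompleteSpace F]
  {T : E →L[𝕜] F} {V : Submodule 𝕜 E} {x : E} {c : ℝ}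

theorem norm_apply_eq_of_adjoint_apply_eq (hc : 0 ≤ c) (hx : (T†) (T x) = ((c ^ 2 : ℝ) : 𝕜) • x) :
    ‖T x‖ = c * ‖x‖ := by
  have : ((‖T x‖ ^ 2 : ℝ) : 𝕜) = (((c * ‖x‖) ^ 2 : ℝ) : 𝕜) := by
    push_cast
    rw [← inner_self_eq_norm_sq_to_K (𝕜 := 𝕜), ← ContinuousLinearMap.adjoint_inner_right, hx,
      inner_smul_right, inner_self_eq_norm_sq_to_K]
    push_cast
    ring
  exact (sq_eq_sq₀ (norm_nonneg _) (by positivity)).1 (RCLike.ofReal_injective this)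

theorem exists_hasEigenvalue_norm_eq {A : E →L[𝕜] E} (hA : IsCompactOperator A)
    (hsymm : A.IsSymmetric) (hA0 : A ≠ 0) :
    ∃ μ : 𝕜, ‖μ‖ = ‖A‖ ∧ End.HasEigenvalue A.toLinearMap μ := by
  have radius_eq := A.spectralRadius_eq_nnnorm hsymm.isSelfAdjoint
  have spectrum_nonempty : (spectrum 𝕜 A).Nonempty := by
    by_contra! h
    have : (‖A‖₊ : ENNReal) = 0 := by simp [← radius_eq, spectralRadius, h]
    exact hA0 (by simpa using this)
  obtain ⟨μ, hμ, hμ_norm⟩ := spectrum.exists_nnnorm_eq_spectralRadius_of_nonempty spectrum_nonempty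
  have norm_eq : ‖μ‖ = ‖A‖ := congrArg NNReal.toReal (ENNReal.coe_inj.1 (hμ_norm.trans radius_eq))
  have hμ0 : μ ≠ 0 := norm_ne_zero_iff.1 (norm_eq ▸ norm_ne_zero_iff.2 hA0)
  exact ⟨μ, norm_eq, (hA.hasEigenvalue_iff_mem_spectrum hμ0).2 hμ⟩

theorem exists_adjoint_apply_eq_norm_sq_smul (hT : IsCompactOperator T) (hT0 : T ≠ 0) :
    ∃ x : E, x ≠ 0 ∧ (T†) (T x) = ((‖T‖ ^ 2 : ℝ) : 𝕜) • x := by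
  have gram_norm : ‖T† ∘L T‖ = ‖T‖ ^ 2 := by
    rw [ContinuousLinearMap.norm_adjoint_comp_self, sq]
  have gram_ne_zero : T† ∘L T ≠ 0 := by
    rw [← norm_ne_zero_iff, gram_norm]
    exact pow_ne_zero 2 (norm_ne_zero_iff.2 hT0)
  have gram_pos := ContinuousLinearMap.isPositive_adjoint_comp_self T
  obtain ⟨μ, μ_norm, hμ⟩ :=
    exists_hasEigenvalue_norm_eq (hT.clm_comp (T†)) gram_pos.isSymmetric gram_ne_zero
  have μ_real : ((RCLike.re μ : ℝ) : 𝕜) = μ :=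
    RCLike.conj_eq_iff_re.1 (gram_pos.isSymmetric.conj_eigenvalue_eq_self hμ)
  have μ_nonneg : 0 ≤ RCLike.re μ :=
    eigenvalue_nonneg_of_nonneg (by rwa [μ_real]) gram_pos.re_inner_nonneg_right
  have μ_eq : μ = ((‖T‖ ^ 2 : ℝ) : 𝕜) := by
    rw [← gram_norm, ← μ_norm, ← μ_real, RCLike.norm_of_nonneg μ_nonneg]
  obtain ⟨x, hx⟩ := hμ.exists_hasEigenvector
  exact ⟨x, hx.2, μ_eq ▸ hx.apply_eq_smul⟩

theorem exists_mem_orthogonal_adjoint_apply_eq (hT : IsCompactOperator T)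
    (hV : V ∈ End.invtSubmodule (T† ∘L T).toLinearMap) (h0 : tailOperator T V ≠ 0) :
    ∃ x ∈ Vᗮ, x ≠ 0 ∧ (T†) (T x) = ((‖tailOperator T V‖ ^ 2 : ℝ) : 𝕜) • x := by
  obtain ⟨x, hx0, hx⟩ := exists_adjoint_apply_eq_norm_sq_smul (hT.comp_clm _) h0
  have adjoint_tail : (tailOperator T V)† = Vᗮ.starProjection ∘L T† := by
    rw [tailOperator, ContinuousLinearMap.adjoint_comp,
      (isSelfAdjoint_starProjection Vᗮ).adjoint_eq]
  rw [adjoint_tail, ContinuousLinearMap.comp_apply] at hx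
  have hne : ((‖tailOperator T V‖ ^ 2 : ℝ) : 𝕜) ≠ 0 := by simpa using h0
  have hxV : x ∈ Vᗮ :=
    (Submodule.smul_mem_iff _ hne).1 (hx ▸ Submodule.starProjection_apply_mem _ _)
  have tail_apply : tailOperator T V x = T x :=
    congrArg T (Submodule.starProjection_eq_self_iff.2 hxV)
  have gram_mem : (T†) (T x) ∈ Vᗮ := by
    have := ContinuousLinearMap.orthogonal_mem_invtSubmodule (T := T† ∘L T) (U := V)
      (by simpa [ContinuousLinearMap.adjoint_comp] using hV)
    exact this hxV
  rw [tail_apply, Submodule.starProjection_eq_self_iff.2 gram_mem] at hx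
  exact ⟨x, hxV, hx0, hx⟩

theorem mul_norm_le_norm_apply_of_mem_sup_span (hc : 0 ≤ c) (hV : ∀ v ∈ V, c * ‖v‖ ≤ ‖T v‖)
    (hxV : x ∈ Vᗮ) (hx : (T†) (T x) = ((c ^ 2 : ℝ) : 𝕜) • x) :
    ∀ w ∈ V ⊔ 𝕜 ∙ x, c * ‖w‖ ≤ ‖T w‖ := by
  intro w hw
  obtain ⟨v, hv, z, hz, rfl⟩ := Submodule.mem_sup.1 hw
  obtain ⟨t, rfl⟩ := Submodule.mem_span_singleton.1 hz
  have orthogonal : inner 𝕜 v (t • x) = 0 :=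
    (Submodule.mem_orthogonal _ _).1 (Submodule.smul_mem _ t hxV) v hv
  have gram_smul : (T†) (T (t • x)) = ((c ^ 2 : ℝ) : 𝕜) • t • x := by
    rw [map_smul, map_smul, hx, smul_comm]
  have image_orthogonal : inner 𝕜 (T v) (T (t • x)) = 0 := by
    rw [← ContinuousLinearMap.adjoint_inner_right, gram_smul, inner_smul_right, orthogonal,
      mul_zero]
  rw [← sq_le_sq₀ (by positivity) (norm_nonneg _)]
  calc (c * ‖v + t • x‖) ^ 2 = (c * ‖v‖) ^ 2 + (c * ‖t • x‖) ^ 2 := by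
        have := norm_add_sq_eq_norm_sq_add_norm_sq_of_inner_eq_zero _ _ orthogonal
        linear_combination c ^ 2 * this
    _ ≤ ‖T v‖ ^ 2 + ‖T (t • x)‖ ^ 2 := by
        rw [norm_apply_eq_of_adjoint_apply_eq hc gram_smul]
        gcongr
        exact hV v hv
    _ = ‖T (v + t • x)‖ ^ 2 := by
        have := norm_add_sq_eq_norm_sq_add_norm_sq_of_inner_eq_zero _ _ image_orthogonal
        rw [map_add]
        linear_combination -this

/-- A dominant singular subspace of `T`: a finite-dimensional subspace, invariant under `T† T`, on
which `T` expands at least as much as anywhere on the orthogonal complement. The span of singular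
vectors belonging to the largest singular values is the model example. -/
structure IsDominantSubspace (T : E →L[𝕜] F) (V : Submodule 𝕜 E) : Prop where
  finiteDimensional : FiniteDimensional 𝕜 V
  mem_invtSubmodule : V ∈ End.invtSubmodule (T† ∘L T).toLinearMap
  norm_tailOperator_mul_le : ∀ v ∈ V, ‖tailOperator T V‖ * ‖v‖ ≤ ‖T v‖

namespace IsDominantSubspace

theorem bot (T : E →L[𝕜] F) : IsDominantSubspace T ⊥ where
  finiteDimensional := inferInstance
  mem_invtSubmodule := End.invtSubmodule.bot_mem _
  norm_tailOperator_mul_le := by simp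

theorem exists_extension (hV : IsDominantSubspace T V) (hT : IsCompactOperator T)
    (h0 : tailOperator T V ≠ 0) :
    ∃ W, V ≤ W ∧ IsDominantSubspace T W ∧ finrank 𝕜 W = finrank 𝕜 V + 1 ∧
      ∀ w ∈ W, ‖tailOperator T V‖ * ‖w‖ ≤ ‖T w‖ := by
  have := hV.finiteDimensional
  obtain ⟨x, hxV, hx0, hx⟩ := exists_mem_orthogonal_adjoint_apply_eq hT hV.mem_invtSubmodule h0
  have hexpand := mul_norm_le_norm_apply_of_mem_sup_span (norm_nonneg _)
    hV.norm_tailOperator_mul_le hxV hx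
  have span_mem : 𝕜 ∙ x ∈ End.invtSubmodule (T† ∘L T).toLinearMap := by
    rw [End.mem_invtSubmodule, Submodule.span_singleton_le_iff_mem]
    exact Submodule.mem_span_singleton.2 ⟨_, hx.symm⟩
  refine ⟨V ⊔ 𝕜 ∙ x, le_sup_left, ⟨inferInstance, ?_, fun w hw => ?_⟩,
    finrank_sup_span_singleton_of_mem_orthogonal hxV hx0, hexpand⟩
  · exact End.invtSubmodule.sup_mem hV.mem_invtSubmodule span_mem
  · exact (mul_le_mul_of_nonneg_right (norm_tailOperator_anti T le_sup_left)
      (norm_nonneg w)).trans (hexpand w hw)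

theorem exists_chain (hT : IsCompactOperator T) :
    ∃ V : ℕ → Submodule 𝕜 E, V 0 = ⊥ ∧ Monotone V ∧ (∀ n, IsDominantSubspace T (V n)) ∧
      (∀ n, finrank 𝕜 (V (n + 1)) ≤ finrank 𝕜 (V n) + 1) ∧
      ∀ n, tailOperator T (V n) ≠ 0 → finrank 𝕜 (V n) = n := by
  have step (V : {V // IsDominantSubspace T V}) : ∃ W : {W // IsDominantSubspace T W},
      V.1 ≤ W.1 ∧ finrank 𝕜 W.1 ≤ finrank 𝕜 V.1 + 1 ∧
        (tailOperator T V.1 ≠ 0 → finrank 𝕜 W.1 = finrank 𝕜 V.1 + 1) := by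
    by_cases h0 : tailOperator T V.1 = 0
    · exact ⟨V, le_rfl, Nat.le_succ _, fun h => absurd h0 h⟩
    · obtain ⟨W, hVW, hW, hdim, -⟩ := V.2.exists_extension hT h0
      exact ⟨⟨W, hW⟩, hVW, hdim.le, fun _ => hdim⟩
  choose next le_next finrank_next_le finrank_next using step
  let V (n : ℕ) : {V // IsDominantSubspace T V} := next^[n] ⟨⊥, bot T⟩
  have V_succ (n : ℕ) : V (n + 1) = next (V n) := Function.iterate_succ_apply' ..
  have V_le_succ (n : ℕ) : (V n).1 ≤ (V (n + 1)).1 := V_succ n ▸ le_next (V n)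
  have finrank_V_succ_le (n : ℕ) : finrank 𝕜 (V (n + 1)).1 ≤ finrank 𝕜 (V n).1 + 1 := by
    rw [V_succ]
    exact finrank_next_le (V n)
  refine ⟨fun n => (V n).1, rfl, monotone_nat_of_le_succ V_le_succ, fun n => (V n).2,
    finrank_V_succ_le, fun n => ?_⟩
  beta_reduce
  induction n with
  | zero => exact fun _ => finrank_bot 𝕜 E
  | succ n ih =>
    intro hne
    have hne' : tailOperator T (V n).1 ≠ 0 :=
      norm_pos_iff.1 ((norm_pos_iff.2 hne).trans_le (norm_tailOperator_anti T (V_le_succ n)))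
    rw [V_succ, finrank_next _ hne', ih hne']

end IsDominantSubspace

end DominantSubspace

section ApproxNumber

variable {H : Type*} [NormedAddCommGroup H] [InnerProductSpace ℂ H] {T : H →L[ℂ] H} {n : ℕ}

theorem le_approxNumber {c : ℝ}
    (h : ∀ u : H →L[ℂ] H, u.toLinearMap.rank ≤ (n : Cardinal) → c ≤ ‖T - u‖) :
    c ≤ approxNumber T n := by
  refine le_csInf ⟨‖T - 0‖, 0, by simp, rfl⟩ ?_
  rintro _ ⟨u, hu, rfl⟩
  exact h u hu

theorem approxNumber_le {u : H →L[ℂ] H} (hu : u.toLinearMap.rank ≤ (n : Cardinal)) :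
    approxNumber T n ≤ ‖T - u‖ := by
  refine csInf_le ⟨0, ?_⟩ ⟨u, hu, rfl⟩
  rintro _ ⟨v, -, rfl⟩
  exact norm_nonneg _

theorem exists_rank_le_norm_sub_lt {c : ℝ} (h : approxNumber T n < c) :
    ∃ u : H →L[ℂ] H, u.toLinearMap.rank ≤ (n : Cardinal) ∧ ‖T - u‖ < c := by
  contrapose! h
  exact le_approxNumber h

variable (T) in
theorem approxNumber_nonneg (n : ℕ) : 0 ≤ approxNumber T n :=
  le_approxNumber fun _ _ => norm_nonneg _

variable (T) in
theorem antitone_approxNumber : Antitone (approxNumber T) := fun _ _ hmn =>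
  le_approxNumber fun _ hu => approxNumber_le (hu.trans (Nat.cast_le.2 hmn))

theorem le_approxNumber_of_forall_mul_norm_le {c : ℝ} {W : Submodule ℂ H}
    (hn : n < finrank ℂ W) (hW : ∀ w ∈ W, c * ‖w‖ ≤ ‖T w‖) : c ≤ approxNumber T n := by
  refine le_approxNumber fun u hu => ?_
  obtain ⟨w, hwW, hw0, huw⟩ := exists_mem_ne_zero_apply_eq_zero_of_rank_le hu hn
  refine le_of_mul_le_mul_right ?_ (norm_pos_iff.2 hw0)
  calc c * ‖w‖ ≤ ‖T w‖ := hW w hwW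
    _ = ‖(T - u) w‖ := by
        rw [sub_apply, ← ContinuousLinearMap.coe_coe u, huw, sub_zero]
    _ ≤ ‖T - u‖ * ‖w‖ := (T - u).le_opNorm w

variable [CompleteSpace H]

theorem isCompactOperator_of_tendsto_approxNumber (h : Tendsto (approxNumber T) atTop (𝓝 0)) :
    IsCompactOperator T := by
  suffices T ∈ closure {u : H →L[ℂ] H | IsCompactOperator u} by
    rwa [isClosed_setOfPred_isCompactOperator.closure_eq] at this
  refine Metric.mem_closure_iff.2 fun ε hε => ?_
  obtain ⟨n, hn⟩ := (h.eventually_lt_const hε).exists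
  obtain ⟨u, hu, hTu⟩ := exists_rank_le_norm_sub_lt hn
  have : FiniteDimensional ℂ u.toLinearMap.range :=
    rank_lt_aleph0_iff.1 (hu.trans_lt Cardinal.natCast_lt_aleph0)
  exact ⟨u, isCompactOperator_of_finiteDimensional_range u, by rwa [dist_eq_norm]⟩

theorem IsDominantSubspace.norm_tailOperator_le_approxNumber {V : Submodule ℂ H}
    (hV : IsDominantSubspace T V) (hT : IsCompactOperator T) :
    ‖tailOperator T V‖ ≤ approxNumber T (finrank ℂ V) := by
  by_cases h0 : tailOperator T V = 0
  · rw [h0, norm_zero]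
    exact approxNumber_nonneg T _
  · obtain ⟨W, -, -, hdim, hW⟩ := hV.exists_extension hT h0
    exact le_approxNumber_of_forall_mul_norm_le (hdim ▸ Nat.lt_succ_self _) hW

theorem exists_chain_norm_tailOperator_le_approxNumber (hT : IsCompactOperator T) :
    ∃ V : ℕ → Submodule ℂ H, V 0 = ⊥ ∧ Monotone V ∧ (∀ n, FiniteDimensional ℂ (V n)) ∧
      (∀ m n, finrank ℂ (V (m + n)) ≤ finrank ℂ (V m) + n) ∧
      ∀ n, ‖tailOperator T (V n)‖ ≤ approxNumber T n := by
  obtain ⟨V, V_zero, V_mono, V_dominant, finrank_succ_le, finrank_eq⟩ :=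
    IsDominantSubspace.exists_chain hT
  refine ⟨V, V_zero, V_mono, fun n => (V_dominant n).finiteDimensional, fun m n => ?_, fun n => ?_⟩
  · induction n with
    | zero => rfl
    | succ n ih => exact (finrank_succ_le (m + n)).trans (Nat.succ_le_succ ih)
  · by_cases h0 : tailOperator T (V n) = 0
    · rw [h0, norm_zero]
      exact approxNumber_nonneg T n
    · simpa only [finrank_eq n h0] using (V_dominant n).norm_tailOperator_le_approxNumber hT

theorem exists_dyadic_tails (hT : IsCompactOperator T) :
    ∃ R : ℕ → H →L[ℂ] H, R 0 = T ∧ (∀ k, ‖R k‖ ≤ approxNumber T (2 ^ k - 1)) ∧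
      (∀ k, ‖R k - R (k + 1)‖ ≤ approxNumber T (2 ^ k - 1)) ∧
      ∀ k, (R k - R (k + 1)).toLinearMap.rank ≤ ((2 ^ k : ℕ) : Cardinal) := by
  obtain ⟨V, V_zero, V_mono, V_fin, finrank_le, norm_le⟩ :=
    exists_chain_norm_tailOperator_le_approxNumber hT
  have index_succ (k : ℕ) : 2 ^ (k + 1) - 1 = 2 ^ k - 1 + 2 ^ k := by
    have := Nat.one_le_two_pow (n := k)
    omega
  have V_le (k : ℕ) : V (2 ^ k - 1) ≤ V (2 ^ (k + 1) - 1) :=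
    V_mono (index_succ k ▸ Nat.le_add_right _ _)
  refine ⟨fun k => tailOperator T (V (2 ^ k - 1)), ?_, fun k => norm_le _, fun k => ?_, fun k => ?_⟩
  · simp only [pow_zero, Nat.sub_self, V_zero, tailOperator_bot]
  · exact (norm_tailOperator_sub_tailOperator_le T (V_le k)).trans (norm_le _)
  · exact rank_tailOperator_sub_tailOperator_le T (V_le k) (index_succ k ▸ finrank_le _ _)

end ApproxNumber

theorem stmt0_general {H : Type*} [NormedAddCommGroup H] [InnerProductSpace ℂ H] [CompleteSpace H]
    (r : ℝ) (hr : 0 < r) (T : H →L[ℂ] H)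
    (hT : Summable fun n => approxNumber T n ^ r) :
    ∃ (α : ℕ → ℝ) (u : ℕ → H →L[ℂ] H),
      (∀ k, ‖u k‖ ≤ 1) ∧
      (∀ k, Module.rank ℂ (LinearMap.range ((u k) : H →ₗ[ℂ] H)) ≤ ((2 ^ k : ℕ) : Cardinal)) ∧
      HasSum (fun k => α k • u k) T ∧
      Summable (fun k => (2 : ℝ) ^ k * |α k| ^ r) ∧
      ∑' k, (2 : ℝ) ^ k * |α k| ^ r ≤ 2 * ∑' n, approxNumber T n ^ r := by
  have compact : IsCompactOperator T := isCompactOperator_of_tendsto_approxNumber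
    (tendsto_zero_of_summable_rpow hr (approxNumber_nonneg T) hT)
  obtain ⟨R, R_zero, norm_R_le, norm_block_le, rank_block_le⟩ := exists_dyadic_tails compact
  have rpow_anti : Antitone fun n => approxNumber T n ^ r := fun _ n hmn =>
    Real.rpow_le_rpow (approxNumber_nonneg T n) (antitone_approxNumber T hmn) hr.le
  have weighted_summable := summable_two_pow_mul_of_antitone rpow_anti hT
  have α_summable : Summable fun k => approxNumber T (2 ^ k - 1) :=
    summable_of_summable_pow_mul_rpow one_lt_two hr (fun _ => approxNumber_nonneg T _)
      weighted_summable
  have block_hasSum : HasSum (fun k => R k - R (k + 1)) T := R_zero ▸ hasSum_sub_succ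
    (.of_norm_bounded α_summable norm_block_le)
    (squeeze_zero_norm norm_R_le α_summable.tendsto_atTop_zero)
  refine ⟨fun k => approxNumber T (2 ^ k - 1),
    fun k => (approxNumber T (2 ^ k - 1))⁻¹ • (R k - R (k + 1)),
    fun k => norm_inv_smul_le_one (norm_block_le k), fun k => ?_, ?_, ?_, ?_⟩
  · exact (Submodule.rank_mono (LinearMap.range_smul_le_range _ _)).trans (rank_block_le k)
  · simpa only [smul_inv_smul_of_norm_le (norm_block_le _)] using block_hasSum
  · simpa only [abs_of_nonneg (approxNumber_nonneg T _)] using weighted_summable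
  · simpa only [abs_of_nonneg (approxNumber_nonneg T _)] using
      tsum_two_pow_mul_le_two_mul_tsum rpow_anti hT

/-- every `T` in the Schatten class `S^r(H)` (`1 ≤ r < ∞`), i.e. every
`T` with `∑_n (approxNumber T n)^r < ∞`, decomposes as `T = ∑_k α_k u_k` (convergence
in operator norm) with `rank u_k ≤ 2^k`, `‖u_k‖ ≤ 1` and
`∑_k 2^k |α_k|^r ≤ 2 ‖T‖_{S^r}^r`. -/
theorem stmt0 {H : Type*} [NormedAddCommGroup H] [InnerProductSpace ℂ H] [CompleteSpace H]
    (r : ℝ) (hr : 1 ≤ r) (T : H →L[ℂ] H)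
    (hT : Summable fun n => approxNumber T n ^ r) :
    ∃ (α : ℕ → ℝ) (u : ℕ → H →L[ℂ] H),
      (∀ k, ‖u k‖ ≤ 1) ∧
      (∀ k, Module.rank ℂ (LinearMap.range ((u k) : H →ₗ[ℂ] H)) ≤ ((2 ^ k : ℕ) : Cardinal)) ∧
      HasSum (fun k => α k • u k) T ∧
      Summable (fun k => (2 : ℝ) ^ k * |α k| ^ r) ∧
      ∑' k, (2 : ℝ) ^ k * |α k| ^ r ≤ 2 * ∑' n, approxNumber T n ^ r :=
  stmt0_general r (one_pos.trans_le hr) T hT
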